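/- arXiv:2508.08586 — 4 statements merged into one kernel-verified Lean document; each statement's English description precedes it below -/
import Mathlib

section
/- Let (α, μ) be a measure space, A a measurable set with μ(A) < ∞, and φ : α → ℝ a measurable function with φ ≥ 0 on A such that both φ and ℓ∘φ are integrable on A. Then for every real K > e, ∫_A φ dμ ≤ K·μ(A) + (1/(log K − 1))·∫_A ℓ(φ) dμ. -/
open MeasureTheory

noncomputable def ell (z : ℝ) : ℝ := z * Real.log z - z + 1

/-!
On `[0, ∞)` the function `ell` is the convex conjugate of `t ↦ exp t - 1`, so Young's inequality
reads `t * z ≤ ell z + (exp t - 1)`. At `t = log K` it gives, together with `K - 1 ≤ K * log K`,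
the pointwise bound `z ≤ K + ell z / log K` for every `K > 1`, which is then integrated. When
`K > exp 1`, the nonnegativity of `ell` allows `log K` to be replaced by `log K - 1`.
-/

section Pointwise

variable {z K : ℝ}

lemma mul_le_ell_add_exp_sub_one (hz : 0 ≤ z) (t : ℝ) : t * z ≤ ell z + (Real.exp t - 1) := by
  rcases hz.eq_or_lt with rfl | hz
  · simpa [ell] using (Real.exp_pos t).le
  · have tangent : t - Real.log z + 1 ≤ Real.exp t / z := by
      simpa only [Real.exp_sub, Real.exp_log hz] using Real.add_one_le_exp (t - Real.log z)
    rw [le_div_iff₀ hz] at tangent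
    unfold ell
    linarith

lemma ell_nonneg (hz : 0 ≤ z) : 0 ≤ ell z := by
  simpa using mul_le_ell_add_exp_sub_one hz 0

lemma le_add_one_div_log_mul_ell (hz : 0 ≤ z) (hK : 1 < K) :
    z ≤ K + 1 / Real.log K * ell z := by
  have hK0 : 0 < K := one_pos.trans hK
  have hlog : 0 < Real.log K := Real.log_pos hK
  have young : Real.log K * z ≤ ell z + (K - 1) := by
    simpa only [Real.exp_log hK0] using mul_le_ell_add_exp_sub_one hz (Real.log K)
  have sub_one_le : K - 1 ≤ K * Real.log K := Real.self_sub_one_le_mul_log hK0.le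
  calc z ≤ (K * Real.log K + ell z) / Real.log K := by
        rw [le_div_iff₀ hlog]
        linarith
    _ = K + 1 / Real.log K * ell z := by field_simp

end Pointwise

section Integral

variable {α : Type*} [MeasurableSpace α] {μ : Measure α} [IsFiniteMeasure μ] {φ : α → ℝ}

lemma integrable_of_integrable_ell (hφ : AEStronglyMeasurable φ μ) (hφ0 : 0 ≤ᵐ[μ] φ)
    (hell : Integrable (fun x => ell (φ x)) μ) : Integrable φ μ := by
  refine (hell.add (integrable_const (Real.exp 1 - 1))).mono' hφ ?_
  filter_upwards [hφ0] with x hx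
  simpa [abs_of_nonneg hx] using mul_le_ell_add_exp_sub_one hx 1

theorem integral_le_of_ell_integrable_general (hφ : AEStronglyMeasurable φ μ)
    (hφ0 : 0 ≤ᵐ[μ] φ) (hell : Integrable (fun x => ell (φ x)) μ) {K : ℝ} (hK : 1 < K) :
    ∫ x, φ x ∂μ ≤ K * μ.real Set.univ + 1 / Real.log K * ∫ x, ell (φ x) ∂μ := by
  have hell_mul : Integrable (fun x => 1 / Real.log K * ell (φ x)) μ := hell.const_mul _
  calc ∫ x, φ x ∂μ
      ≤ ∫ x, (K + 1 / Real.log K * ell (φ x)) ∂μ := by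
        refine integral_mono_ae (integrable_of_integrable_ell hφ hφ0 hell)
          ((integrable_const K).add hell_mul) ?_
        filter_upwards [hφ0] with x hx using le_add_one_div_log_mul_ell hx hK
    _ = K * μ.real Set.univ + 1 / Real.log K * ∫ x, ell (φ x) ∂μ := by
        rw [integral_add (integrable_const K) hell_mul, integral_const, integral_const_mul,
          smul_eq_mul, mul_comm K]

end Integral

theorem integral_le_of_ell_integrable
    {α : Type*} [MeasurableSpace α] (μ : Measure α) (A : Set α)
    (hA : MeasurableSet A) (hfin : μ A < ⊤)
    (φ : α → ℝ) (hφ : Measurable φ) (hφ0 : ∀ x ∈ A, 0 ≤ φ x)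
    (hint : IntegrableOn φ A μ)
    (hint' : IntegrableOn (fun x => ell (φ x)) A μ)
    (K : ℝ) (hK : Real.exp 1 < K) :
    ∫ x in A, φ x ∂μ ≤ K * (μ A).toReal +
      (1 / (Real.log K - 1)) * ∫ x in A, ell (φ x) ∂μ := by
  have : IsFiniteMeasure (μ.restrict A) := isFiniteMeasure_restrict.2 hfin.ne
  have hlog : 0 < Real.log K - 1 :=
    sub_pos.2 ((Real.lt_log_iff_exp_lt ((Real.exp_pos 1).trans hK)).2 hK)
  have hell_nonneg : 0 ≤ ∫ x in A, ell (φ x) ∂μ :=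
    setIntegral_nonneg hA fun x hx => ell_nonneg (hφ0 x hx)
  have bound : ∫ x in A, φ x ∂μ ≤
      K * (μ A).toReal + 1 / Real.log K * ∫ x in A, ell (φ x) ∂μ := by
    simpa only [measureReal_def, Measure.restrict_apply_univ] using
      integral_le_of_ell_integrable_general hφ.aestronglyMeasurable
        (ae_restrict_of_forall_mem hA hφ0) hint' ((Real.one_lt_exp_iff.2 one_pos).trans hK)
  exact bound.trans (by gcongr; exact sub_le_self _ zero_le_one)
end

section
/- Fix T > 0 and let d : ℕ → ℕ satisfy d(n)/n → 0 as n → ∞. For each n ≥ 1 let c_n be the probability that a Gamma-distributed random variable with shape parameter d(n)+1 and rate parameter 2n is at most T, i.e. c_n = (Gamma measure with shape d(n)+1 and rate 2n)(Iic T). Then (1/n)·log c_n → 0 as n → ∞. -/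
open ProbabilityTheory

open MeasureTheory Filter Topology

/-!
The Gamma distribution with shape `a` and rate `r` has mean `a / r`, because multiplying its density
by `x` gives `a / r` times the density with shape `a + 1`. By Markov's inequality it gives mass at
least `1 - a / (r * T)` to `(-∞, T]`. For `a = d n + 1` and `r = 2 * n` this bound tends to `1`, so
that `log c_n → 0` even before dividing by `n`.
-/

section Gamma

variable {a r : ℝ}

lemma ofReal_mul_gammaPDF (ha : 0 < a) (hr : 0 < r) (x : ℝ) :
    ENNReal.ofReal x * gammaPDF a r x = ENNReal.ofReal (a / r) * gammaPDF (a + 1) r x := by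
  rcases lt_or_ge x 0 with hx | hx
  · simp only [gammaPDF_of_neg hx, mul_zero]
  have hpow : x ^ a = x ^ (a - 1) * x := by
    rw [← Real.rpow_add_one' hx (by simpa using ha.ne'), sub_add_cancel]
  have hΓ : Real.Gamma a ≠ 0 := (Real.Gamma_pos_of_pos ha).ne'
  rw [gammaPDF_of_nonneg hx, gammaPDF_of_nonneg hx, ← ENNReal.ofReal_mul hx,
    ← ENNReal.ofReal_mul (by positivity), add_sub_cancel_right, hpow, Real.Gamma_add_one ha.ne',
    Real.rpow_add_one hr.ne']
  congr 1
  field_simp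

lemma lintegral_ofReal_gammaMeasure (ha : 0 < a) (hr : 0 < r) :
    ∫⁻ x, ENNReal.ofReal x ∂gammaMeasure a r = ENNReal.ofReal (a / r) := by
  have hmeas (b : ℝ) : Measurable (gammaPDF b r) := (measurable_gammaPDFReal b r).ennreal_ofReal
  calc ∫⁻ x, ENNReal.ofReal x ∂gammaMeasure a r
      = ∫⁻ x, ENNReal.ofReal x * gammaPDF a r x := by
        rw [gammaMeasure, lintegral_withDensity_eq_lintegral_mul _ (hmeas a)
          ENNReal.measurable_ofReal]
        simp only [Pi.mul_apply, mul_comm]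
    _ = ∫⁻ x, ENNReal.ofReal (a / r) * gammaPDF (a + 1) r x := by
        simp only [ofReal_mul_gammaPDF ha hr]
    _ = ENNReal.ofReal (a / r) := by
        rw [lintegral_const_mul _ (hmeas (a + 1)), lintegral_gammaPDF_eq_one (by positivity) hr,
          mul_one]

lemma gammaMeasure_Ioi_le (ha : 0 < a) (hr : 0 < r) {T : ℝ} (hT : 0 < T) :
    gammaMeasure a r (Set.Ioi T) ≤ ENNReal.ofReal (a / (r * T)) :=
  calc gammaMeasure a r (Set.Ioi T)
      ≤ gammaMeasure a r {x | ENNReal.ofReal T ≤ ENNReal.ofReal x} :=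
        measure_mono fun _ hx ↦ ENNReal.ofReal_le_ofReal (Set.mem_Ioi.mp hx).le
    _ ≤ (∫⁻ x, ENNReal.ofReal x ∂gammaMeasure a r) / ENNReal.ofReal T :=
        meas_ge_le_lintegral_div ENNReal.measurable_ofReal.aemeasurable
          (ENNReal.ofReal_pos.mpr hT).ne' ENNReal.ofReal_ne_top
    _ = ENNReal.ofReal (a / (r * T)) := by
        rw [lintegral_ofReal_gammaMeasure ha hr, ← ENNReal.ofReal_div_of_pos hT, div_div]

lemma one_sub_le_gammaMeasure_real_Iic (ha : 0 < a) (hr : 0 < r) {T : ℝ} (hT : 0 < T) :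
    1 - a / (r * T) ≤ (gammaMeasure a r).real (Set.Iic T) := by
  have := isProbabilityMeasure_gammaMeasure ha hr
  have htail : (gammaMeasure a r).real (Set.Ioi T) ≤ a / (r * T) :=
    ENNReal.toReal_le_of_le_ofReal (by positivity) (gammaMeasure_Ioi_le ha hr hT)
  rw [← Set.compl_Iic, probReal_compl_eq_one_sub measurableSet_Iic] at htail
  linarith

end Gamma

section Limit

variable {ι : Type*} {l : Filter ι} {a r T : ι → ℝ}

lemma tendsto_gammaMeasure_real_Iic_one (ha : ∀ᶠ i in l, 0 < a i) (hr : ∀ᶠ i in l, 0 < r i)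
    (hT : ∀ᶠ i in l, 0 < T i) (h : Tendsto (fun i ↦ a i / (r i * T i)) l (𝓝 0)) :
    Tendsto (fun i ↦ (gammaMeasure (a i) (r i)).real (Set.Iic (T i))) l (𝓝 1) := by
  have hlower : Tendsto (fun i ↦ 1 - a i / (r i * T i)) l (𝓝 1) := by
    simpa only [sub_zero] using h.const_sub 1
  refine tendsto_of_tendsto_of_tendsto_of_le_of_le' hlower tendsto_const_nhds ?_ ?_
  · filter_upwards [ha, hr, hT] with i hai hri hTi
    exact one_sub_le_gammaMeasure_real_Iic hai hri hTi
  · filter_upwards [ha, hr] with i hai hri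
    have := isProbabilityMeasure_gammaMeasure hai hri
    exact measureReal_le_one

theorem log_gamma_prob_div_tendsto_zero_general (ha : ∀ᶠ i in l, 0 < a i)
    (hr : ∀ᶠ i in l, 0 < r i) (hT : ∀ᶠ i in l, 0 < T i)
    (h : Tendsto (fun i ↦ a i / (r i * T i)) l (𝓝 0)) :
    Tendsto (fun i ↦ Real.log ((gammaMeasure (a i) (r i)).real (Set.Iic (T i)))) l (𝓝 0) := by
  simpa only [Real.log_one] using
    (tendsto_gammaMeasure_real_Iic_one ha hr hT h).log one_ne_zero

end Limit

lemma tendsto_add_div_mul_of_tendsto_div {u : ℕ → ℝ}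
    (hu : Tendsto (fun n ↦ u n / n) atTop (𝓝 0)) (b c : ℝ) :
    Tendsto (fun n : ℕ ↦ (u n + b) / (c * n)) atTop (𝓝 0) := by
  have hsum : Tendsto (fun n : ℕ ↦ (u n / n + b / n) / c) atTop (𝓝 0) := by
    simpa using (hu.add (tendsto_const_div_atTop_nhds_zero_nat b)).div_const c
  refine hsum.congr fun n ↦ ?_
  rw [← add_div, div_div, mul_comm]

theorem log_gamma_prob_div_tendsto_zero (T : ℝ) (hT : 0 < T)
    (d : ℕ → ℕ)
    (hdn : Filter.Tendsto (fun n => (d n : ℝ) / n) Filter.atTop (nhds 0)) :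
    Filter.Tendsto
      (fun n : ℕ =>
        (1 / (n : ℝ)) *
          Real.log ((gammaMeasure ((d n : ℝ) + 1) (2 * n) (Set.Iic T)).toReal))
      Filter.atTop (nhds 0) := by
  have hratio : Tendsto (fun n : ℕ ↦ ((d n : ℝ) + 1) / (2 * n * T)) atTop (𝓝 0) := by
    simpa only [mul_right_comm] using tendsto_add_div_mul_of_tendsto_div hdn 1 (2 * T)
  have hrate : ∀ᶠ n : ℕ in atTop, (0 : ℝ) < 2 * n := by
    filter_upwards [eventually_gt_atTop 0] with n hn using by positivity
  have hlog := log_gamma_prob_div_tendsto_zero_general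
    (.of_forall fun n ↦ by positivity) hrate (.of_forall fun _ ↦ hT) hratio
  simpa only [mul_zero, measureReal_def] using tendsto_one_div_atTop_nhds_zero_nat.mul hlog
end

section
/- Fix T ≥ 0. Let ζ : [0,T] → ℓ¹(ℕ, ℝ) be continuous (with respect to the ℓ¹ norm), and suppose that for every t ∈ [0,T] and every i ∈ ℕ one has 0 ≤ ζ(t)_i ≤ 1 and ζ(t)_{i+1} ≤ ζ(t)_i. Then there exist M ∈ ℕ and a constant c < 1 such that ζ(t)_M ≤ c for all t ∈ [0,T]. -/
/-!
A sequence in `ℓᵖ` whose entries decrease in norm has its first `n + 1` entries at least as large as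
the `n`-th one, so `(n + 1) ‖x n‖ᵖ ≤ ‖x‖ᵖ`. The entries thus decay at a rate that depends only on
`‖x‖`, hence uniformly over norm-bounded families, in particular over a compact image.
-/

open Filter Topology

section Decay

variable {E : ℕ → Type*} [∀ i, NormedAddCommGroup (E i)] {p : ENNReal}

theorem succ_mul_norm_apply_rpow_le_norm_rpow (hp : 0 < p.toReal) {x : lp E p}
    (hx : Antitone fun i ↦ ‖x i‖) (n : ℕ) :
    ((n : ℝ) + 1) * ‖x n‖ ^ p.toReal ≤ ‖x‖ ^ p.toReal :=
  calc ((n : ℝ) + 1) * ‖x n‖ ^ p.toReal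
      = ∑ _i ∈ Finset.range (n + 1), ‖x n‖ ^ p.toReal := by simp
    _ ≤ ∑ i ∈ Finset.range (n + 1), ‖x i‖ ^ p.toReal := by
      gcongr with i hi
      exact hx (Finset.mem_range_succ_iff.mp hi)
    _ ≤ ‖x‖ ^ p.toReal := lp.sum_rpow_le_norm_rpow hp x _

theorem norm_apply_le_rpow_mul_norm (hp : 0 < p.toReal) {x : lp E p}
    (hx : Antitone fun i ↦ ‖x i‖) (n : ℕ) :
    ‖x n‖ ≤ ((n : ℝ) + 1) ^ (-p.toReal⁻¹) * ‖x‖ := by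
  have hn : (0 : ℝ) < n + 1 := n.cast_add_one_pos
  have hnorm : 0 ≤ ‖x‖ := lp.norm_nonneg' x
  rw [← Real.rpow_le_rpow_iff (norm_nonneg _) (by positivity) hp,
    Real.mul_rpow (by positivity) hnorm, ← Real.rpow_mul hn.le, neg_mul,
    inv_mul_cancel₀ hp.ne', Real.rpow_neg_one, le_inv_mul_iff₀ hn]
  exact succ_mul_norm_apply_rpow_le_norm_rpow hp hx n

theorem exists_coord_lt_one_general (hp : 0 < p.toReal) {α : Type*} {s : Set α}
    {ζ : α → lp E p} {C : ℝ} (hbdd : ∀ t ∈ s, ‖ζ t‖ ≤ C)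
    (hanti : ∀ t ∈ s, Antitone fun i ↦ ‖ζ t i‖) {ε : ℝ} (hε : 0 < ε) :
    ∃ M : ℕ, ∀ t ∈ s, ‖ζ t M‖ ≤ ε := by
  have hdecay : Tendsto (fun n : ℕ ↦ ((n : ℝ) + 1) ^ (-p.toReal⁻¹) * C) atTop (𝓝 0) := by
    simpa only [Function.comp_def, zero_mul] using
      ((tendsto_rpow_neg_atTop (inv_pos.mpr hp)).comp
        (tendsto_natCast_atTop_atTop.atTop_add tendsto_const_nhds)).mul_const C
  obtain ⟨M, hM⟩ := (hdecay.eventually_le_const hε).exists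
  refine ⟨M, fun t ht ↦ ?_⟩
  calc ‖ζ t M‖ ≤ ((M : ℝ) + 1) ^ (-p.toReal⁻¹) * ‖ζ t‖ :=
        norm_apply_le_rpow_mul_norm hp (hanti t ht) M
    _ ≤ ((M : ℝ) + 1) ^ (-p.toReal⁻¹) * C := by gcongr; exact hbdd t ht
    _ ≤ ε := hM

end Decay

theorem exists_coord_lt_one (T : ℝ) (hT : 0 ≤ T)
    (ζ : ℝ → lp (fun _ : ℕ => ℝ) 1)
    (hcont : ContinuousOn ζ (Set.Icc 0 T))
    (hbound : ∀ t ∈ Set.Icc 0 T, ∀ i : ℕ,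
      0 ≤ ζ t i ∧ ζ t i ≤ 1 ∧ ζ t (i + 1) ≤ ζ t i) :
    ∃ (M : ℕ) (c : ℝ), c < 1 ∧ ∀ t ∈ Set.Icc 0 T, ζ t M ≤ c := by
  obtain ⟨C, hC⟩ := isCompact_Icc.exists_bound_of_continuousOn hcont
  obtain ⟨M, hM⟩ := exists_coord_lt_one_general (by simp) hC
    (fun t ht ↦ antitone_nat_of_succ_le fun i ↦
      abs_le_abs_of_nonneg (hbound t ht (i + 1)).1 (hbound t ht i).2.2) one_half_pos
  exact ⟨M, 1 / 2, one_half_lt_one, fun t ht ↦ (le_abs_self _).trans (hM t ht)⟩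
end

section
/- The function f : [0,∞) → ℝ defined by f(c) = ℓ((c + √(c² + 4))/2) + ℓ((−c + √(c² + 4))/2) is monotone nondecreasing on [0,∞). -/
/-! Substituting `c = 2 sinh t`, the two arguments of `ell` become `exp t` and `exp (-t)`, and the
sum of the two values becomes `2 (t sinh t - cosh t) + 2`, whose derivative in `t` is
`2 t cosh t`. -/

open Real Set

theorem add_sqrt_sq_add_four_div_two (c : ℝ) : (c + √(c ^ 2 + 4)) / 2 = exp (arsinh (c / 2)) := by
  have sqrt_eq : √(c ^ 2 + 4) = 2 * √(1 + (c / 2) ^ 2) := by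
    rw [show c ^ 2 + 4 = 2 ^ 2 * (1 + (c / 2) ^ 2) by ring, sqrt_mul (by positivity),
      sqrt_sq zero_le_two]
  rw [exp_arsinh, sqrt_eq]
  ring

theorem neg_add_sqrt_sq_add_four_div_two (c : ℝ) :
    (-c + √(c ^ 2 + 4)) / 2 = exp (-arsinh (c / 2)) := by
  rw [← arsinh_neg, ← neg_div, ← add_sqrt_sq_add_four_div_two, neg_sq]

theorem ell_exp_add_ell_exp_neg (t : ℝ) :
    ell (exp t) + ell (exp (-t)) = 2 * (t * sinh t - cosh t) + 2 := by
  simp only [ell, log_exp, sinh_eq, cosh_eq]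
  ring

theorem hasDerivAt_mul_sinh_sub_cosh (t : ℝ) :
    HasDerivAt (fun t ↦ t * sinh t - cosh t) (t * cosh t) t := by
  simpa using ((hasDerivAt_id' t).fun_mul (hasDerivAt_sinh t)).fun_sub (hasDerivAt_cosh t)

theorem strictMonoOn_mul_sinh_sub_cosh : StrictMonoOn (fun t ↦ t * sinh t - cosh t) (Ici 0) := by
  refine strictMonoOn_of_hasDerivWithinAt_pos (convex_Ici 0) (by fun_prop)
    (fun t _ ↦ (hasDerivAt_mul_sinh_sub_cosh t).hasDerivWithinAt) fun t ht ↦ ?_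
  have t_pos : 0 < t := by simpa using ht
  exact mul_pos t_pos (cosh_pos t)

theorem ell_min_monotone :
    MonotoneOn
      (fun c : ℝ =>
        ell ((c + Real.sqrt (c ^ 2 + 4)) / 2) +
          ell ((-c + Real.sqrt (c ^ 2 + 4)) / 2))
      (Set.Ici (0 : ℝ)) := by
  intro c hc d hd hcd
  have arsinh_half_nonneg {x : ℝ} (hx : 0 ≤ x) : 0 ≤ arsinh (x / 2) :=
    arsinh_nonneg_iff.2 (div_nonneg hx zero_le_two)
  have arsinh_half_le : arsinh (c / 2) ≤ arsinh (d / 2) := arsinh_le_arsinh.2 (by gcongr)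
  simp only [add_sqrt_sq_add_four_div_two, neg_add_sqrt_sq_add_four_div_two,
    ell_exp_add_ell_exp_neg]
  gcongr 2 * ?_ + 2
  exact strictMonoOn_mul_sinh_sub_cosh.monotoneOn (arsinh_half_nonneg hc) (arsinh_half_nonneg hd)
    arsinh_half_le
end
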